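/- Let x^∞ be a sequence over a finite alphabet 𝒳. Then liminf_{k→∞} liminf_{n→∞} (1/k) Ĥ^k(x^n) ≤ liminf_{k→∞} liminf_{n→∞} (1/k) Ĥ^k_sw(x^n) and limsup_{k→∞} limsup_{n→∞} (1/k) Ĥ^k(x^n) ≤ limsup_{k→∞} limsup_{n→∞} (1/k) Ĥ^k_sw(x^n); that is, the block-by-block per-symbol empirical entropy limits are upper-bounded by the corresponding sliding-window quantities. -/

import Mathlib

open Filter

/-- Base-2 Shannon entropy of a finitely-supported distribution given as a function. -/
noncomputable def ent2 {β : Type*} [Fintype β] (q : β → ℝ) : ℝ :=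
  ∑ b, -(q b * Real.logb 2 (q b))

/-- The `k`-th order block-by-block empirical distribution of `x^n`: the fraction of the
`⌊n/k⌋` disjoint `k`-blocks of `x^n` equal to a given word `w`. -/
noncomputable def blockDist {𝒳 : Type*} [DecidableEq 𝒳] (x : ℕ → 𝒳) (k n : ℕ)
    (w : Fin k → 𝒳) : ℝ :=
  (((Finset.range (n / k)).filter
      (fun i => (fun j : Fin k => x (k * i + (j : ℕ))) = w)).card : ℝ) / ((n / k : ℕ) : ℝ)

/-- The `k`-th order block-by-block empirical entropy `Ĥ^k(x^n)` (base 2). -/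
noncomputable def Hblock {𝒳 : Type*} [Fintype 𝒳] [DecidableEq 𝒳] (x : ℕ → 𝒳) (k n : ℕ) : ℝ :=
  ent2 (blockDist x k n)

/-- The `k`-th order sliding-window empirical distribution of `x^n`: the fraction of the
`n−k+1` length-`k` windows of `x^n` equal to a given word `w`. -/
noncomputable def swDist {𝒳 : Type*} [DecidableEq 𝒳] (x : ℕ → 𝒳) (k n : ℕ)
    (w : Fin k → 𝒳) : ℝ :=
  (((Finset.range (n - k + 1)).filter
      (fun i => (fun j : Fin k => x (i + (j : ℕ))) = w)).card : ℝ) / ((n - k + 1 : ℕ) : ℝ)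

/-- The `k`-th order sliding-window empirical entropy `Ĥ^k_sw(x^n)` (base 2). -/
noncomputable def Hsw {𝒳 : Type*} [Fintype 𝒳] [DecidableEq 𝒳] (x : ℕ → 𝒳) (k n : ℕ) : ℝ :=
  ent2 (swDist x k n)

section Empirical

variable {ι β : Type*} [DecidableEq β]

/-- The empirical distribution of the values of `g` on the finite index set `I`. -/
noncomputable def empDist (I : Finset ι) (g : ι → β) (b : β) : ℝ :=
  ((I.filter (fun i => g i = b)).card : ℝ) / (I.card : ℝ)

lemma empDist_nonneg (I : Finset ι) (g : ι → β) (b : β) : 0 ≤ empDist I g b := by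
  unfold empDist; positivity

lemma empDist_le_one (I : Finset ι) (g : ι → β) (b : β) : empDist I g b ≤ 1 :=
  div_le_one_of_le₀ (by exact_mod_cast Finset.card_filter_le _ _) (by positivity)

lemma empDist_apply_pos {I : Finset ι} (g : ι → β) {i : ι} (hi : i ∈ I) :
    0 < empDist I g (g i) := by
  have h₁ : 0 < (I.filter (fun j => g j = g i)).card :=
    Finset.card_pos.2 ⟨i, by simp [hi]⟩
  have h₂ : 0 < I.card := Finset.card_pos.2 ⟨i, hi⟩
  unfold empDist
  positivity

lemma card_mul_empDist (I : Finset ι) (g : ι → β) (b : β) :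
    (I.card : ℝ) * empDist I g b = ((I.filter (fun i => g i = b)).card : ℝ) := by
  rcases I.eq_empty_or_nonempty with rfl | hI
  · simp
  · have : (I.card : ℝ) ≠ 0 := by exact_mod_cast hI.card_ne_zero
    unfold empDist
    field_simp

variable [Fintype β]

lemma sum_comp_eq_sum_card_mul (I : Finset ι) (g : ι → β) (F : β → ℝ) :
    ∑ i ∈ I, F (g i) = ∑ b, ((I.filter (fun i => g i = b)).card : ℝ) * F b := by
  rw [← Finset.sum_fiberwise I g]
  refine Finset.sum_congr rfl fun b _ => ?_
  rw [Finset.sum_congr rfl (g := fun _ => F b)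
    (fun i hi => by rw [(Finset.mem_filter.1 hi).2])]
  simp

lemma sum_empDist_le_one (I : Finset ι) (g : ι → β) : ∑ b, empDist I g b ≤ 1 := by
  have h := sum_comp_eq_sum_card_mul I g (fun _ => 1)
  simp only [mul_one, Finset.sum_const, nsmul_eq_mul] at h
  unfold empDist
  rw [← Finset.sum_div, ← h]
  exact div_self_le_one _

lemma card_mul_ent2_empDist (I : Finset ι) (g : ι → β) :
    (I.card : ℝ) * ent2 (empDist I g) = ∑ i ∈ I, -Real.logb 2 (empDist I g (g i)) := by
  rw [sum_comp_eq_sum_card_mul I g (fun b => -Real.logb 2 (empDist I g b)), ent2,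
    Finset.mul_sum]
  refine Finset.sum_congr rfl fun b _ => ?_
  rw [← card_mul_empDist]
  ring

lemma ent2_empDist_nonneg (I : Finset ι) (g : ι → β) : 0 ≤ ent2 (empDist I g) := by
  refine Finset.sum_nonneg fun b _ => ?_
  rw [neg_nonneg]
  exact mul_nonpos_of_nonneg_of_nonpos (empDist_nonneg I g b)
    (Real.logb_nonpos one_lt_two (empDist_nonneg I g b) (empDist_le_one I g b))

/-- Gibbs' inequality for empirical distributions. -/
lemma card_mul_ent2_empDist_le (I : Finset ι) (g : ι → β) (q : β → ℝ) (hq : ∀ b, 0 ≤ q b)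
    (hsum : ∑ b, q b ≤ 1) (hpos : ∀ i ∈ I, 0 < q (g i)) :
    (I.card : ℝ) * ent2 (empDist I g) ≤ ∑ i ∈ I, -Real.logb 2 (q (g i)) := by
  have hlog : (0 : ℝ) < Real.log 2 := Real.log_pos one_lt_two
  have key : ∀ i ∈ I, Real.log (q (g i)) - Real.log (empDist I g (g i))
      ≤ q (g i) / empDist I g (g i) - 1 := fun i hi => by
    have hp := empDist_apply_pos g hi
    rw [← Real.log_div (hpos i hi).ne' hp.ne']
    exact Real.log_le_sub_one_of_pos (div_pos (hpos i hi) hp)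
  have hratio : ∑ i ∈ I, q (g i) / empDist I g (g i) ≤ I.card := by
    rw [sum_comp_eq_sum_card_mul I g (fun b => q b / empDist I g b)]
    calc _ ≤ ∑ b, (I.card : ℝ) * q b := by
          refine Finset.sum_le_sum fun b _ => ?_
          rw [← card_mul_empDist]
          rcases (empDist_nonneg I g b).eq_or_lt with h | h
          · rw [← h]; simpa using mul_nonneg (Nat.cast_nonneg _) (hq b)
          · exact le_of_eq (by field_simp)
      _ = I.card * ∑ b, q b := by rw [Finset.mul_sum]
      _ ≤ I.card := mul_le_of_le_one_right (by positivity) hsum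
  have hnat := Finset.sum_le_sum key
  simp only [Finset.sum_sub_distrib, Finset.sum_const, nsmul_eq_mul, mul_one] at hnat
  rw [card_mul_ent2_empDist]
  simp only [Finset.sum_neg_distrib, Real.logb, ← Finset.sum_div]
  rw [neg_le_neg_iff, div_le_div_iff_of_pos_right hlog]
  linarith

end Empirical

section Factors

variable {𝒳 : Type*} [Fintype 𝒳] {x : ℕ → 𝒳}

/-- `c s` is the mass given to the word of length `m` of `x` starting at `s` by some
sub-probability mass function on words of length `m`, independent of `s`. -/
def IsWordMass (x : ℕ → 𝒳) (m : ℕ) (c : ℕ → ℝ) : Prop :=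
  ∃ q : (Fin m → 𝒳) → ℝ, (∀ w, 0 ≤ q w) ∧ ∑ w, q w ≤ 1 ∧
    ∀ s, q (fun i : Fin m => x (s + i)) = c s

lemma IsWordMass.append {a b : ℕ} {c d : ℕ → ℝ} (hc : IsWordMass x a c)
    (hd : IsWordMass x b d) : IsWordMass x (a + b) (fun s => c s * d (s + a)) := by
  obtain ⟨q, hq, hqs, hqv⟩ := hc
  obtain ⟨r, hr, hrs, hrv⟩ := hd
  refine ⟨fun w => q (fun i => w (Fin.castAdd b i)) * r (fun i => w (Fin.natAdd a i)),
    fun w => mul_nonneg (hq _) (hr _), ?_, fun s => ?_⟩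
  · rw [← (Fin.appendEquiv a b).sum_comp, Fintype.sum_prod_type]
    simp only [Fin.appendEquiv, Equiv.coe_fn_mk, Fin.append_left, Fin.append_right]
    rw [← Finset.sum_mul_sum]
    exact mul_le_one₀ hqs (Finset.sum_nonneg fun w _ => hr w) hrs
  · simp only [Fin.val_castAdd, Fin.val_natAdd, ← hqv, ← hrv, add_assoc]

lemma isWordMass_uniform (x : ℕ → 𝒳) (m : ℕ) :
    IsWordMass x m (fun _ => ((Fintype.card 𝒳 : ℝ) ^ m)⁻¹) := by
  refine ⟨fun _ => ((Fintype.card 𝒳 : ℝ) ^ m)⁻¹, fun _ => by positivity, ?_, fun _ => rfl⟩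
  simpa using mul_inv_le_one

lemma IsWordMass.prod {k : ℕ} {c : ℕ → ℝ} (hc : IsWordMass x k c) (t : ℕ) :
    IsWordMass x (k * t) (fun s => ∏ u ∈ Finset.range t, c (s + k * u)) := by
  induction t with
  | zero => simpa using isWordMass_uniform x 0
  | succ t ih => simpa [Finset.prod_range_succ, Nat.mul_succ] using ih.append hc

lemma IsWordMass.pad {k K T j : ℕ} {c : ℕ → ℝ} (hc : IsWordMass x k c)
    (h : k * T + j ≤ K) :
    IsWordMass x K (fun s => ((Fintype.card 𝒳 : ℝ) ^ (K - k * T))⁻¹ *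
      ∏ u ∈ Finset.range T, c (s + j + k * u)) := by
  obtain ⟨r, rfl⟩ := Nat.exists_eq_add_of_le h
  have := ((isWordMass_uniform x j).append (hc.prod T)).append (isWordMass_uniform x r)
  have e₁ : j + k * T + r = k * T + j + r := by ring
  have e₂ : k * T + j + r - k * T = j + r := by omega
  rw [e₁] at this
  rw [e₂]
  convert this using 2
  rw [pow_add, mul_inv]
  ring

end Factors

lemma sum_range_sum_range_mul (F : ℕ → ℝ) (k T : ℕ) :
    ∑ u ∈ Finset.range T, ∑ j ∈ Finset.range k, F (k * u + j) =
      ∑ v ∈ Finset.range (k * T), F v := by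
  induction T with
  | zero => simp
  | succ T ih => rw [Finset.sum_range_succ, ih, Nat.mul_succ, Finset.sum_range_add]

lemma sum_range_sum_range_le {F : ℕ → ℝ} (hF : ∀ s, 0 ≤ F s) {K M N R : ℕ} (hMK : M ≤ K)
    (hR : K * N + M ≤ R) :
    ∑ i ∈ Finset.range (N + 1), ∑ v ∈ Finset.range M, F (K * i + v) ≤
      ∑ s ∈ Finset.range R, F s := by
  calc _ ≤ ∑ i ∈ Finset.range N, ∑ v ∈ Finset.range K, F (K * i + v) +
        ∑ v ∈ Finset.range M, F (K * N + v) := by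
        rw [Finset.sum_range_succ]
        gcongr with i
        exact fun _ _ _ => hF _
    _ = ∑ s ∈ Finset.range (K * N + M), F s := by
        rw [sum_range_sum_range_mul, Finset.sum_range_add]
    _ ≤ _ := Finset.sum_le_sum_of_subset_of_nonneg (Finset.range_mono hR) fun _ _ _ => hF _

lemma logb_card_nonneg {𝒳 : Type*} [Fintype 𝒳] : 0 ≤ Real.logb 2 (Fintype.card 𝒳) := by
  rcases Nat.eq_zero_or_pos (Fintype.card 𝒳) with h | h
  · simp [h]
  · exact Real.logb_nonneg one_lt_two (by exact_mod_cast h)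

lemma card_cast_pos_of_seq {𝒳 : Type*} [Fintype 𝒳] (x : ℕ → 𝒳) : (0 : ℝ) < Fintype.card 𝒳 := by
  exact_mod_cast Fintype.card_pos_iff.2 ⟨x 0⟩

lemma blockDist_eq_empDist {𝒳 : Type*} [DecidableEq 𝒳] (x : ℕ → 𝒳) (k n : ℕ) :
    blockDist x k n =
      empDist (Finset.range (n / k)) (fun i (j : Fin k) => x (k * i + j)) := by
  funext w
  simp only [blockDist, empDist, Finset.card_range]

lemma swDist_eq_empDist {𝒳 : Type*} [DecidableEq 𝒳] (x : ℕ → 𝒳) (k n : ℕ) :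
    swDist x k n =
      empDist (Finset.range (n - k + 1)) (fun i (j : Fin k) => x (i + j)) := by
  funext w
  simp only [swDist, empDist, Finset.card_range]

section Words

variable {𝒳 : Type*} [Fintype 𝒳] [DecidableEq 𝒳] (x : ℕ → 𝒳)

lemma Hblock_nonneg (k n : ℕ) : 0 ≤ Hblock x k n := by
  rw [Hblock, blockDist_eq_empDist]
  exact ent2_empDist_nonneg _ _

lemma Hsw_nonneg (k n : ℕ) : 0 ≤ Hsw x k n := by
  rw [Hsw, swDist_eq_empDist]
  exact ent2_empDist_nonneg _ _

lemma IsWordMass.mul_Hblock_le {x : ℕ → 𝒳} {K : ℕ} {c : ℕ → ℝ} (hc : IsWordMass x K c) (n : ℕ)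
    (hpos : ∀ i < n / K, 0 < c (K * i)) :
    ((n / K : ℕ) : ℝ) * Hblock x K n ≤
      ∑ i ∈ Finset.range (n / K), -Real.logb 2 (c (K * i)) := by
  obtain ⟨q, hq, hqs, hqv⟩ := hc
  have := card_mul_ent2_empDist_le (Finset.range (n / K))
    (fun i (j : Fin K) => x (K * i + j)) q hq hqs
    (fun i hi => by rw [hqv]; exact hpos i (Finset.mem_range.1 hi))
  simpa only [Hblock, blockDist_eq_empDist, Finset.card_range, hqv] using this

lemma Hsw_le (k n : ℕ) : Hsw x k n ≤ k * Real.logb 2 (Fintype.card 𝒳) := by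
  obtain ⟨q, hq, hqs, hqv⟩ := isWordMass_uniform x k
  have hA := card_cast_pos_of_seq x
  have := card_mul_ent2_empDist_le (Finset.range (n - k + 1))
    (fun i (j : Fin k) => x (i + j)) q hq hqs
    (fun i hi => by rw [hqv]; positivity)
  simp only [hqv, Finset.card_range, Real.logb_inv, Real.logb_pow, neg_neg, Finset.sum_const,
    nsmul_eq_mul, ← swDist_eq_empDist] at this
  exact le_of_mul_le_mul_left this (by positivity)

lemma Hblock_le {k n : ℕ} (hk : 1 ≤ k) (hn : k ≤ n) :
    Hblock x k n ≤ k * Real.logb 2 (Fintype.card 𝒳) := by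
  have hA := card_cast_pos_of_seq x
  have := (isWordMass_uniform x k).mul_Hblock_le n (fun i _ => by positivity)
  simp only [Finset.card_range, Real.logb_inv, Real.logb_pow, neg_neg, Finset.sum_const,
    nsmul_eq_mul] at this
  exact le_of_mul_le_mul_left this (by exact_mod_cast Nat.div_pos hn hk)

lemma isWordMass_swDist (k n : ℕ) :
    IsWordMass x k (fun s => swDist x k n (fun j : Fin k => x (s + j))) := by
  refine ⟨swDist x k n, ?_, ?_, fun _ => rfl⟩ <;> rw [swDist_eq_empDist]
  · exact empDist_nonneg _ _
  · exact sum_empDist_le_one _ _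

/-- Comparison of the block entropy of order `K` with the sliding-window entropy of order `k`,
obtained by averaging over the `k` ways to cut a block into windows. -/
lemma mul_Hblock_le_Hsw {k K n : ℕ} (hk : 1 ≤ k) (hkK : k ≤ K) (hKn : K ≤ n) :
    (k : ℝ) * (((n / K : ℕ) : ℝ) * Hblock x K n) ≤
      ((n - k + 1 : ℕ) : ℝ) * Hsw x k n +
        k * (((n / K : ℕ) : ℝ) * (2 * k * Real.logb 2 (Fintype.card 𝒳))) := by
  have hA := card_cast_pos_of_seq x
  have hL := logb_card_nonneg (𝒳 := 𝒳)
  set L := Real.logb 2 (Fintype.card 𝒳)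
  set N := n / K with hN
  obtain ⟨T, hT₁, hT₂⟩ : ∃ T, k * T + k ≤ K ∧ K ≤ k * T + 2 * k := by
    refine ⟨K / k - 1, ?_, ?_⟩
    all_goals
      obtain ⟨t, ht⟩ : ∃ t, K / k = t + 1 :=
        Nat.exists_eq_succ_of_ne_zero (Nat.div_pos hkK hk).ne'
      have h₁ := Nat.div_add_mod K k
      have h₂ := Nat.mod_lt K hk
      rw [ht] at h₁ ⊢
      rw [Nat.mul_succ] at h₁
      simp only [Nat.add_sub_cancel]
      omega
  obtain ⟨M, hM⟩ : ∃ M, N = M + 1 :=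
    Nat.exists_eq_succ_of_ne_zero (Nat.div_pos hKn (hk.trans hkK)).ne'
  have hNK : K * N ≤ n := Nat.mul_div_le n K
  let c : ℕ → ℝ := fun s => swDist x k n (fun j : Fin k => x (s + j))
  let F : ℕ → ℝ := fun s => -Real.logb 2 (c s)
  have hc : IsWordMass x k c := isWordMass_swDist x k n
  have hF : ∀ s, 0 ≤ F s := fun s => by
    simp only [F, c, swDist_eq_empDist, neg_nonneg]
    exact Real.logb_nonpos one_lt_two (empDist_nonneg _ _ _) (empDist_le_one _ _ _)
  have hcpos : ∀ s, s + k ≤ n → 0 < c s := fun s hs => by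
    simp only [c, swDist_eq_empDist]
    exact empDist_apply_pos (I := Finset.range (n - k + 1))
      (fun i (j : Fin k) => x (i + j)) (Finset.mem_range.2 (by omega))
  have hcpos' : ∀ i < N, ∀ j < k, ∀ u < T, 0 < c (K * i + j + k * u) := by
    intro i hi j hj u hu
    apply hcpos
    have h₁ : K * (i + 1) ≤ K * N := Nat.mul_le_mul_left K hi
    have h₂ : k * (u + 1) ≤ k * T := Nat.mul_le_mul_left k hu
    rw [Nat.mul_succ] at h₁ h₂
    omega
  have hphase : ∀ j ∈ Finset.range k, (N : ℝ) * Hblock x K n ≤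
      N * (2 * k * L) +
        ∑ i ∈ Finset.range N, ∑ u ∈ Finset.range T, F (K * i + (k * u + j)) := by
    intro j hj
    rw [Finset.mem_range] at hj
    have hprod : ∀ i < N, 0 < ∏ u ∈ Finset.range T, c (K * i + j + k * u) := fun i hi =>
      Finset.prod_pos fun u hu => hcpos' i hi j hj u (Finset.mem_range.1 hu)
    refine ((hc.pad (j := j) (K := K) (T := T) (by omega)).mul_Hblock_le n fun i hi =>
      mul_pos (by positivity) (hprod i hi)).trans ?_
    have hconst : (N : ℝ) * (2 * k * L) = ∑ i ∈ Finset.range N, 2 * k * L := by simp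
    rw [hconst, ← Finset.sum_add_distrib]
    refine Finset.sum_le_sum fun i hi => ?_
    have hi' := Finset.mem_range.1 hi
    rw [Real.logb_mul (by positivity) (hprod i hi').ne', neg_add, Real.logb_inv, neg_neg,
      Real.logb_pow, Real.logb_prod _ _ fun u hu =>
        (hcpos' i hi' j hj u (Finset.mem_range.1 hu)).ne', ← Finset.sum_neg_distrib]
    have hlen : ((K - k * T : ℕ) : ℝ) ≤ 2 * k := by exact_mod_cast (by omega)
    refine add_le_add (mul_le_mul_of_nonneg_right hlen hL) (le_of_eq ?_)
    refine Finset.sum_congr rfl fun u _ => ?_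
    simp only [F]
    rw [add_assoc, add_comm j]
  have hsum := Finset.sum_le_sum hphase
  rw [Finset.sum_add_distrib] at hsum
  simp only [Finset.sum_const, Finset.card_range, nsmul_eq_mul] at hsum
  have hwin : ∑ j ∈ Finset.range k, ∑ i ∈ Finset.range N, ∑ u ∈ Finset.range T,
      F (K * i + (k * u + j)) ≤ ((n - k + 1 : ℕ) : ℝ) * Hsw x k n := by
    have hHsw : ((n - k + 1 : ℕ) : ℝ) * Hsw x k n = ∑ s ∈ Finset.range (n - k + 1), F s := by
      have := card_mul_ent2_empDist (Finset.range (n - k + 1))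
        (fun i (j : Fin k) => x (i + j))
      rw [← swDist_eq_empDist, Finset.card_range] at this
      exact this
    rw [hHsw, Finset.sum_comm]
    simp_rw [Finset.sum_comm (s := Finset.range k) (t := Finset.range T)]
    simp_rw [fun i => sum_range_sum_range_mul (fun v => F (K * i + v)) k T]
    rw [hM]
    refine sum_range_sum_range_le hF (by omega) ?_
    rw [hM, Nat.mul_succ] at hNK
    omega
  linarith

lemma Hblock_div_le_Hsw_div {k K n : ℕ} (hk : 1 ≤ k) (hkK : k ≤ K) (hKn : K ≤ n) :
    1 / (K : ℝ) * Hblock x K n ≤ 1 / (k : ℝ) * Hsw x k n +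
      (2 * Real.logb 2 (Fintype.card 𝒳) * k / K +
        Real.logb 2 (Fintype.card 𝒳) / ((n / K : ℕ) : ℝ)) := by
  have h := mul_Hblock_le_Hsw x hk hkK hKn
  have hs := Hsw_le x k n
  have hs₀ := Hsw_nonneg x k n
  have hL := logb_card_nonneg (𝒳 := 𝒳)
  set L := Real.logb 2 (Fintype.card 𝒳)
  have hk' : (0 : ℝ) < k := by exact_mod_cast hk
  have hK' : (0 : ℝ) < K := by exact_mod_cast hk.trans hkK
  have hN' : (0 : ℝ) < ((n / K : ℕ) : ℝ) := by
    exact_mod_cast Nat.div_pos hKn (hk.trans hkK)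
  have hn : ((n - k + 1 : ℕ) : ℝ) ≤ K * ((n / K : ℕ) : ℝ) + K := by
    have h₁ := Nat.div_add_mod n K
    have h₂ := Nat.mod_lt n (hk.trans hkK)
    exact_mod_cast (by omega : n - k + 1 ≤ K * (n / K) + K)
  set N := ((n / K : ℕ) : ℝ)
  have hfin : k * (N * Hblock x K n) ≤
      K * N * Hsw x k n + K * (k * L) + k * (N * (2 * k * L)) := by
    nlinarith [mul_le_mul_of_nonneg_right hn hs₀, mul_le_mul_of_nonneg_left hs hK'.le]
  rw [← mul_le_mul_iff_right₀ (by positivity : 0 < k * N * K)]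
  have e₁ : k * N * K * (1 / K * Hblock x K n) = k * (N * Hblock x K n) := by field_simp
  have e₂ : k * N * K * (1 / k * Hsw x k n + (2 * L * k / K + L / N)) =
      K * N * Hsw x k n + K * (k * L) + k * (N * (2 * k * L)) := by
    field_simp
    ring
  rw [e₁, e₂]
  exact hfin

lemma eventually_Hblock_div_le {k K : ℕ} (hk : 1 ≤ k) (hkK : k ≤ K) {ε : ℝ} (hε : 0 < ε) :
    ∀ᶠ n : ℕ in atTop, 1 / (K : ℝ) * Hblock x K n ≤ 1 / (k : ℝ) * Hsw x k n +
      (2 * Real.logb 2 (Fintype.card 𝒳) * k / K + ε) := by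
  have ht : Tendsto (fun n : ℕ => Real.logb 2 (Fintype.card 𝒳) / ((n / K : ℕ) : ℝ)) atTop
      (nhds 0) :=
    tendsto_const_nhds.div_atTop (tendsto_natCast_atTop_atTop.comp
      (Nat.tendsto_div_const_atTop (by omega)))
  filter_upwards [ht.eventually_le_const hε, eventually_ge_atTop K] with n hn hKn
  have := Hblock_div_le_Hsw_div x hk hkK hKn
  linarith

lemma div_mul_mem_Icc {k : ℕ} (hk : 1 ≤ k) {H L : ℝ} (h₀ : 0 ≤ H) (h₁ : H ≤ k * L) :
    1 / (k : ℝ) * H ∈ Set.Icc 0 L := by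
  have hk' : (0 : ℝ) < k := by exact_mod_cast hk
  refine ⟨by positivity, ?_⟩
  rw [one_div_mul_eq_div, div_le_iff₀ hk']
  linarith

lemma eventually_Hblock_div_mem {k : ℕ} (hk : 1 ≤ k) :
    ∀ᶠ n : ℕ in atTop,
      1 / (k : ℝ) * Hblock x k n ∈ Set.Icc 0 (Real.logb 2 (Fintype.card 𝒳)) := by
  filter_upwards [eventually_ge_atTop k] with n hn
  exact div_mul_mem_Icc hk (Hblock_nonneg x k n) (Hblock_le x hk hn)

lemma eventually_Hsw_div_mem {k : ℕ} (hk : 1 ≤ k) :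
    ∀ᶠ n : ℕ in atTop,
      1 / (k : ℝ) * Hsw x k n ∈ Set.Icc 0 (Real.logb 2 (Fintype.card 𝒳)) :=
  Eventually.of_forall fun n => div_mul_mem_Icc hk (Hsw_nonneg x k n) (Hsw_le x k n)

end Words

section Limits

variable {u v : ℕ → ℝ} {a b : ℝ}

lemma isBoundedUnder_le_of_eventually_mem_Icc (hu : ∀ᶠ n in atTop, u n ∈ Set.Icc a b) :
    IsBoundedUnder (· ≤ ·) atTop u :=
  isBoundedUnder_of_eventually_le (hu.mono fun _ h => h.2)

lemma isBoundedUnder_ge_of_eventually_mem_Icc (hu : ∀ᶠ n in atTop, u n ∈ Set.Icc a b) :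
    IsBoundedUnder (· ≥ ·) atTop u :=
  isBoundedUnder_of_eventually_ge (hu.mono fun _ h => h.1)

lemma limsup_mem_Icc (hu : ∀ᶠ n in atTop, u n ∈ Set.Icc a b) : limsup u atTop ∈ Set.Icc a b :=
  have hle := isBoundedUnder_le_of_eventually_mem_Icc hu
  have hge := isBoundedUnder_ge_of_eventually_mem_Icc hu
  ⟨le_limsup_of_frequently_le (hu.mono fun _ h => h.1).frequently hle,
    limsup_le_of_le hge.isCoboundedUnder_le (hu.mono fun _ h => h.2)⟩

lemma liminf_mem_Icc (hu : ∀ᶠ n in atTop, u n ∈ Set.Icc a b) : liminf u atTop ∈ Set.Icc a b :=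
  have hle := isBoundedUnder_le_of_eventually_mem_Icc hu
  have hge := isBoundedUnder_ge_of_eventually_mem_Icc hu
  ⟨le_liminf_of_le hle.isCoboundedUnder_ge (hu.mono fun _ h => h.1),
    liminf_le_of_frequently_le (hu.mono fun _ h => h.2).frequently hge⟩

lemma liminf_le_liminf_add_of_forall_pos (hu : ∀ᶠ n in atTop, u n ∈ Set.Icc a b)
    (hv : ∀ᶠ n in atTop, v n ∈ Set.Icc a b) {c : ℝ}
    (h : ∀ ε > 0, ∀ᶠ n in atTop, u n ≤ v n + (c + ε)) :
    liminf u atTop ≤ liminf v atTop + c := by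
  refine le_of_forall_pos_le_add fun ε hε => ?_
  have hle := isBoundedUnder_le_of_eventually_mem_Icc hv
  have hge := isBoundedUnder_ge_of_eventually_mem_Icc hv
  have hvc : ∀ᶠ n in atTop, v n + (c + ε) ∈ Set.Icc (a + (c + ε)) (b + (c + ε)) :=
    hv.mono fun n hn => ⟨by linarith [hn.1], by linarith [hn.2]⟩
  have := liminf_le_liminf (h ε hε) (isBoundedUnder_ge_of_eventually_mem_Icc hu)
    (isBoundedUnder_le_of_eventually_mem_Icc hvc).isCoboundedUnder_ge
  rw [liminf_add_const atTop v (c + ε) hle.isCoboundedUnder_ge hge] at this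
  linarith

lemma limsup_le_limsup_add_of_forall_pos (hu : ∀ᶠ n in atTop, u n ∈ Set.Icc a b)
    (hv : ∀ᶠ n in atTop, v n ∈ Set.Icc a b) {c : ℝ}
    (h : ∀ ε > 0, ∀ᶠ n in atTop, u n ≤ v n + (c + ε)) :
    limsup u atTop ≤ limsup v atTop + c := by
  refine le_of_forall_pos_le_add fun ε hε => ?_
  have hle := isBoundedUnder_le_of_eventually_mem_Icc hv
  have hge := isBoundedUnder_ge_of_eventually_mem_Icc hv
  have hvc : ∀ᶠ n in atTop, v n + (c + ε) ∈ Set.Icc (a + (c + ε)) (b + (c + ε)) :=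
    hv.mono fun n hn => ⟨by linarith [hn.1], by linarith [hn.2]⟩
  have := limsup_le_limsup (h ε hε)
    (isBoundedUnder_ge_of_eventually_mem_Icc hu).isCoboundedUnder_le
    (isBoundedUnder_le_of_eventually_mem_Icc hvc)
  rw [limsup_add_const atTop v (c + ε) hle hge.isCoboundedUnder_le] at this
  linarith

lemma limsup_le_liminf_of_le_add_div (hu : ∀ᶠ n in atTop, u n ∈ Set.Icc a b)
    (hv : ∀ᶠ n in atTop, v n ∈ Set.Icc a b) (C : ℝ)
    (h : ∀ k K : ℕ, 1 ≤ k → k ≤ K → u K ≤ v k + C * k / K) :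
    limsup u atTop ≤ liminf v atTop := by
  refine le_liminf_of_le (isBoundedUnder_le_of_eventually_mem_Icc hv).isCoboundedUnder_ge ?_
  filter_upwards [eventually_ge_atTop 1] with k hk
  refine le_of_forall_pos_le_add fun ε hε => ?_
  refine limsup_le_of_le
    (isBoundedUnder_ge_of_eventually_mem_Icc hu).isCoboundedUnder_le ?_
  have ht : Tendsto (fun K : ℕ => C * k / (K : ℝ)) atTop (nhds 0) :=
    tendsto_const_nhds.div_atTop tendsto_natCast_atTop_atTop
  filter_upwards [ht.eventually_le_const hε, eventually_ge_atTop k] with K hK hkK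
  linarith [h k K hk hkK]

end Limits

/-- The paper's Lemma 7 (Appendix A): the block-by-block per-symbol empirical entropy
limits are upper-bounded by the corresponding sliding-window quantities. -/
theorem block_le_sliding {𝒳 : Type*} [Fintype 𝒳] [DecidableEq 𝒳] (x : ℕ → 𝒳) :
    (liminf (fun k : ℕ => liminf (fun n : ℕ => (1 / (k : ℝ)) * Hblock x k n) atTop) atTop
      ≤ liminf (fun k : ℕ => liminf (fun n : ℕ => (1 / (k : ℝ)) * Hsw x k n) atTop) atTop)
    ∧ (limsup (fun k : ℕ => limsup (fun n : ℕ => (1 / (k : ℝ)) * Hblock x k n) atTop) atTop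
      ≤ limsup (fun k : ℕ => limsup (fun n : ℕ => (1 / (k : ℝ)) * Hsw x k n) atTop) atTop) := by
  have hb := fun (k : ℕ) (hk : 1 ≤ k) => eventually_Hblock_div_mem x hk
  have hs := fun (k : ℕ) (hk : 1 ≤ k) => eventually_Hsw_div_mem x hk
  have hBi := (eventually_ge_atTop 1).mono fun k hk => liminf_mem_Icc (hb k hk)
  have hSi := (eventually_ge_atTop 1).mono fun k hk => liminf_mem_Icc (hs k hk)
  have hBs := (eventually_ge_atTop 1).mono fun k hk => limsup_mem_Icc (hb k hk)
  have hSs := (eventually_ge_atTop 1).mono fun k hk => limsup_mem_Icc (hs k hk)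
  constructor
  · exact (liminf_le_limsup (isBoundedUnder_le_of_eventually_mem_Icc hBi)
      (isBoundedUnder_ge_of_eventually_mem_Icc hBi)).trans
      (limsup_le_liminf_of_le_add_div hBi hSi _ fun k K hk hkK =>
        liminf_le_liminf_add_of_forall_pos (hb K (hk.trans hkK)) (hs k hk)
          fun ε hε => eventually_Hblock_div_le x hk hkK hε)
  · exact (limsup_le_liminf_of_le_add_div hBs hSs _ fun k K hk hkK =>
        limsup_le_limsup_add_of_forall_pos (hb K (hk.trans hkK)) (hs k hk)
          fun ε hε => eventually_Hblock_div_le x hk hkK hε).trans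
      (liminf_le_limsup (isBoundedUnder_le_of_eventually_mem_Icc hSs)
        (isBoundedUnder_ge_of_eventually_mem_Icc hSs))
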